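/- Assume (K0)–(K3) and let f ∈ L¹(Ω, δ^γ). Then u := 𝒢(f) belongs to L¹_loc(Ω), and it is the unique function u ∈ L¹_loc(Ω) satisfying ∫_Ω u ψ = ∫_Ω f 𝒢(ψ) for every ψ ∈ L∞_c(Ω). Moreover, for every compact K ⊂ Ω, ∫_K |u| ≤ (∫_Ω |f| δ^γ) · ‖δ^{−γ} 𝒢(χ_K)‖_{L∞(Ω)}, and the right-hand side is finite. -/

import Mathlib

/-!
Everything rests on the boundary estimate `∫_K 𝔾(x,y) dy ≤ C δ(x)^γ`, for `K ⊆ Ω` compact and all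
`x ∈ Ω`. On `K` the distance `δ` lies between two positive constants `c ≤ D`. If `|x-y| ≥ c/2`,
then `δ(x)δ(y)/|x-y|²` is at most a multiple of `δ(x)`; if `|x-y| < c/2`, then `δ(x) ≥ c/2` because
`δ` is 1-Lipschitz, so that `1` is at most a multiple of `δ(x)`. Hence
`H(x,y) ≤ C δ(x)^γ |x-y|^{2s-n}`, and `∫_Ω |x-y|^{2s-n} dy` is bounded over `x ∈ Ω` because `Ω` is
bounded and `s > 0`.

Tonelli and the symmetry of `𝔾` then give
`∫_K ∫_Ω 𝔾(x,y)|f(y)| dy dx = ∫_Ω |f| 𝒢(χ_K) ≤ ‖δ^{-γ} 𝒢(χ_K)‖_∞ ∫_Ω |f| δ^γ`.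
This is the compact estimate; it shows that `𝒢(f)` is locally integrable and justifies Fubini's
theorem in the duality identity. Testing with the indicators of compact sets gives uniqueness.
-/

open MeasureTheory Metric Set Filter Topology

noncomputable section

abbrev Euc (n : ℕ) : Type := EuclideanSpace ℝ (Fin n)

/-- Distance to the boundary of `Ω`. -/
noncomputable def bdist {n : ℕ} (Ω : Set (Euc n)) (x : Euc n) : ℝ :=
  Metric.infDist x (frontier Ω)

/-- The two-sided model kernel `H(x,y)` of hypothesis (K2). -/
noncomputable def Hker {n : ℕ} (Ω : Set (Euc n)) (s γ : ℝ) (x y : Euc n) : ℝ :=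
  dist x y ^ (2 * s - (n : ℝ)) *
    (min (bdist Ω x * bdist Ω y / dist x y ^ (2 : ℝ)) 1) ^ γ

/-- The Green operator `𝒢(f)(x) = ∫_Ω 𝔾(x,y) f(y) dy` of hypothesis (K0). -/
noncomputable def Gop {n : ℕ} (Ω : Set (Euc n)) (G : Euc n → Euc n → ℝ)
    (f : Euc n → ℝ) (x : Euc n) : ℝ :=
  ∫ y in Ω, G x y * f y

section KernelOperator

variable {X : Type*} [MeasurableSpace X] {μ : Measure X} {Ω K : Set X} {G : X → X → ℝ}

/-- The integral operator over `Ω` with kernel `G`. On `Euc n` the operator `Gop` is the case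
`μ = volume`. -/
def kernelOp (μ : Measure X) (Ω : Set X) (G : X → X → ℝ) (f : X → ℝ) (x : X) : ℝ :=
  ∫ y in Ω, G x y * f y ∂μ

lemma kernelOp_indicator_one (hK : MeasurableSet K) (hKΩ : K ⊆ Ω) (x : X) :
    kernelOp μ Ω G (K.indicator fun _ => 1) x = ∫ y in K, G x y ∂μ := by
  have hprod : (fun y => G x y * K.indicator (fun _ => (1 : ℝ)) y) = K.indicator (G x) := by
    ext y
    by_cases hy : y ∈ K <;> simp [hy]
  rw [kernelOp, hprod, setIntegral_indicator hK, inter_eq_self_of_subset_right hKΩ]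

lemma lintegral_enorm_mul_le_mul_eLpNorm_top_div {f g w : X → ℝ} (hw : ∀ᵐ x ∂μ, 0 < w x)
    (hf : Integrable (fun x => |f x| * w x) μ) :
    ∫⁻ x, ‖f x * g x‖ₑ ∂μ ≤
      ENNReal.ofReal (∫ x, |f x| * w x ∂μ) * eLpNorm (fun x => g x / w x) ⊤ μ := by
  have hfw : ∀ᵐ x ∂μ, 0 ≤ |f x| * w x := hw.mono fun x hx => by positivity
  have hess : ∀ᵐ x ∂μ, ‖g x / w x‖ₑ ≤ eLpNorm (fun x => g x / w x) ⊤ μ := by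
    rw [eLpNorm_exponent_top]
    exact ae_le_eLpNormEssSup
  rw [ofReal_integral_eq_lintegral_ofReal hf hfw,
    ← lintegral_mul_const'' _ hf.aestronglyMeasurable.aemeasurable.ennreal_ofReal]
  refine lintegral_mono_ae ?_
  filter_upwards [hw, hess] with x hx hle
  calc ‖f x * g x‖ₑ = ‖|f x| * w x * (g x / w x)‖ₑ := by
        rw [mul_assoc, mul_div_cancel₀ _ hx.ne', enorm_mul, enorm_mul, Real.enorm_abs]
    _ = ENNReal.ofReal (|f x| * w x) * ‖g x / w x‖ₑ := by
        rw [enorm_mul, Real.enorm_of_nonneg (by positivity)]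
    _ ≤ ENNReal.ofReal (|f x| * w x) * eLpNorm (fun x => g x / w x) ⊤ μ := by gcongr

lemma lintegral_lintegral_enorm_kernel_mul {ν : Measure X} [SFinite μ] [SFinite ν]
    (hGm : Measurable (Function.uncurry G)) (hGsymm : ∀ x y, G x y = G y x) {f : X → ℝ}
    (hf : AEStronglyMeasurable f ν) :
    ∫⁻ x, ∫⁻ y, ‖G x y * f y‖ₑ ∂ν ∂μ = ∫⁻ y, ‖f y‖ₑ * ∫⁻ x, ‖G y x‖ₑ ∂μ ∂ν := by
  have hmeas : AEMeasurable (Function.uncurry fun x y => ‖G x y * f y‖ₑ) (μ.prod ν) :=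
    (hGm.aestronglyMeasurable.mul hf.comp_snd).enorm
  rw [lintegral_lintegral_swap hmeas]
  refine lintegral_congr fun y => ?_
  rw [← lintegral_const_mul' _ _ enorm_ne_top]
  exact lintegral_congr fun x => by rw [enorm_mul, hGsymm x y, mul_comm]

lemma setIntegral_kernelOp_mul_comm [SFinite μ] (hGsymm : ∀ x y, G x y = G y x) {f ψ : X → ℝ}
    (hint : Integrable (Function.uncurry fun x y => ψ x * (G x y * f y))
      ((μ.restrict Ω).prod (μ.restrict Ω))) :
    ∫ x in Ω, kernelOp μ Ω G f x * ψ x ∂μ = ∫ x in Ω, f x * kernelOp μ Ω G ψ x ∂μ :=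
  calc ∫ x in Ω, kernelOp μ Ω G f x * ψ x ∂μ
      = ∫ x in Ω, ∫ y in Ω, ψ x * (G x y * f y) ∂μ ∂μ := by
        simp only [kernelOp, integral_const_mul, mul_comm _ (ψ _)]
    _ = ∫ y in Ω, ∫ x in Ω, ψ x * (G x y * f y) ∂μ ∂μ := integral_integral_swap hint
    _ = ∫ y in Ω, f y * kernelOp μ Ω G ψ y ∂μ := by
        simp only [kernelOp, ← integral_const_mul]
        congr! 4 with y _ x
        rw [hGsymm x y]
        ring

end KernelOperator

section WeakDualSolution

variable {X : Type*} [TopologicalSpace X] [MeasurableSpace X] {μ : Measure X} {Ω : Set X}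

/-- `u` satisfies `∫_Ω u ψ = ∫_Ω f 𝒢(ψ)` for all `ψ ∈ L∞_c(Ω)`, where `𝒢` has kernel `G`. Both
integrals are Bochner integrals, so the notion is meaningful for locally integrable `u`. -/
def IsWeakDualSolution (μ : Measure X) (Ω : Set X) (G : X → X → ℝ) (f u : X → ℝ) : Prop :=
  ∀ ψ : X → ℝ, Measurable ψ → (∃ M, ∀ x, |ψ x| ≤ M) → IsCompact (tsupport ψ) → tsupport ψ ⊆ Ω →
    ∫ x in Ω, u x * ψ x ∂μ = ∫ x in Ω, f x * kernelOp μ Ω G ψ x ∂μ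

variable [T2Space X] [BorelSpace X]

lemma IsWeakDualSolution.setIntegral_eq {G : X → X → ℝ} {f u : X → ℝ}
    (hu : IsWeakDualSolution μ Ω G f u) {K : Set X} (hK : IsCompact K) (hKΩ : K ⊆ Ω) :
    ∫ x in K, u x ∂μ = ∫ x in Ω, f x * kernelOp μ Ω G (K.indicator fun _ => 1) x ∂μ := by
  have hsupp : tsupport (K.indicator fun _ => (1 : ℝ)) ⊆ K :=
    closure_minimal support_indicator_subset hK.isClosed
  have hbdd : ∀ x, |K.indicator (fun _ => (1 : ℝ)) x| ≤ 1 := fun x => by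
    by_cases hx : x ∈ K <;> simp [hx]
  have hprod : (fun x => u x * K.indicator (fun _ => (1 : ℝ)) x) = K.indicator u := by
    ext x
    by_cases hx : x ∈ K <;> simp [hx]
  rw [← hu _ (measurable_const.indicator hK.measurableSet) ⟨1, hbdd⟩
      (hK.of_isClosed_subset (isClosed_tsupport _) hsupp) (hsupp.trans hKΩ),
    hprod, setIntegral_indicator hK.measurableSet, inter_eq_self_of_subset_right hKΩ]

variable [SecondCountableTopology X] [LocallyCompactSpace X]

lemma ae_restrict_eq_zero_of_forall_setIntegral_isCompact_eq_zero {E : Type*}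
    [NormedAddCommGroup E] [NormedSpace ℝ E] [CompleteSpace E] (hΩ : IsOpen Ω) {v : X → E}
    (hv : LocallyIntegrableOn v Ω μ) (h0 : ∀ K ⊆ Ω, IsCompact K → ∫ x in K, v x ∂μ = 0) :
    v =ᵐ[μ.restrict Ω] 0 := by
  rw [EventuallyEq, ae_restrict_iff' hΩ.measurableSet]
  refine measure_null_of_locally_null _ fun x hx => ?_
  have hxΩ : x ∈ Ω := (Classical.not_imp.1 hx).1
  obtain ⟨K, hK, hxK, hKΩ⟩ := exists_compact_subset hΩ hxΩ
  have hvK : v =ᵐ[μ.restrict K] 0 := by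
    refine ae_eq_zero_of_forall_setIntegral_isCompact_eq_zero
      (hv.integrableOn_compact_subset hKΩ hK) fun s hs => ?_
    rw [Measure.restrict_restrict hs.measurableSet]
    exact h0 _ (inter_subset_right.trans hKΩ) (hs.inter hK)
  refine ⟨_, inter_mem_nhdsWithin _ (mem_interior_iff_mem_nhds.1 hxK), ?_⟩
  rw [EventuallyEq, ae_restrict_iff' hK.measurableSet] at hvK
  refine measure_mono_null (fun y hy => ?_) (ae_iff.1 hvK)
  exact fun h => hy.1 fun _ => h hy.2

lemma IsWeakDualSolution.ae_eq {G : X → X → ℝ} {f u v : X → ℝ} (hΩ : IsOpen Ω)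
    (hu : LocallyIntegrableOn u Ω μ) (hv : LocallyIntegrableOn v Ω μ)
    (hu' : IsWeakDualSolution μ Ω G f u) (hv' : IsWeakDualSolution μ Ω G f v) :
    u =ᵐ[μ.restrict Ω] v := by
  refine (sub_ae_eq_zero u v).1
    (ae_restrict_eq_zero_of_forall_setIntegral_isCompact_eq_zero hΩ (hu.sub hv) fun K hKΩ hK => ?_)
  rw [integral_sub' (hu.integrableOn_compact_subset hKΩ hK) (hv.integrableOn_compact_subset hKΩ hK),
    hu'.setIntegral_eq hK hKΩ, hv'.setIntegral_eq hK hKΩ, sub_self]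

end WeakDualSolution

section GreenKernel

variable {X : Type*} [TopologicalSpace X] [MeasurableSpace X] {μ : Measure X} {Ω K : Set X}
  {G : X → X → ℝ} {w f : X → ℝ}

/-- A nonnegative symmetric kernel on `Ω` under which the potential of every compact subset of `Ω`
is at most a multiple of the positive weight `w`. For Green kernels, `w` is `δ^γ`. -/
structure IsGreenKernel (μ : Measure X) (Ω : Set X) (G : X → X → ℝ) (w : X → ℝ) : Prop where
  measurable : Measurable (Function.uncurry G)
  nonneg : ∀ x y, 0 ≤ G x y
  symm : ∀ x y, G x y = G y x
  weight_pos : ∀ x ∈ Ω, 0 < w x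
  potential_le : ∀ K ⊆ Ω, IsCompact K →
    ∃ C, ∀ x ∈ Ω, IntegrableOn (G x) K μ ∧ ∫ y in K, G x y ∂μ ≤ C * w x

namespace IsGreenKernel

variable [T2Space X] [BorelSpace X]

lemma eLpNorm_kernelOp_indicator_div_lt_top (hG : IsGreenKernel μ Ω G w) (hΩ : MeasurableSet Ω)
    (hK : IsCompact K) (hKΩ : K ⊆ Ω) :
    eLpNorm (fun x => kernelOp μ Ω G (K.indicator fun _ => 1) x / w x) ⊤ (μ.restrict Ω) < ⊤ := by
  obtain ⟨C, hC⟩ := hG.potential_le K hKΩ hK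
  rw [eLpNorm_exponent_top]
  refine eLpNormEssSup_lt_top_of_ae_bound (C := C) ?_
  filter_upwards [ae_restrict_mem hΩ] with x hx
  have hw := hG.weight_pos x hx
  have hpot : 0 ≤ ∫ y in K, G x y ∂μ := integral_nonneg (hG.nonneg x)
  rw [kernelOp_indicator_one hK.measurableSet hKΩ, Real.norm_of_nonneg (by positivity),
    div_le_iff₀ hw]
  exact (hC x hx).2

variable [SFinite μ]

lemma lintegral_lintegral_enorm_le (hG : IsGreenKernel μ Ω G w) (hΩ : MeasurableSet Ω)
    (hfm : AEStronglyMeasurable f (μ.restrict Ω)) (hf : IntegrableOn (fun x => |f x| * w x) Ω μ)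
    (hK : IsCompact K) (hKΩ : K ⊆ Ω) :
    ∫⁻ x in K, ∫⁻ y in Ω, ‖G x y * f y‖ₑ ∂μ ∂μ ≤
      ENNReal.ofReal (∫ x in Ω, |f x| * w x ∂μ) *
        eLpNorm (fun x => kernelOp μ Ω G (K.indicator fun _ => 1) x / w x) ⊤ (μ.restrict Ω) := by
  obtain ⟨C, hC⟩ := hG.potential_le K hKΩ hK
  have hpot : ∀ y ∈ Ω, ∫⁻ x in K, ‖G y x‖ₑ ∂μ =
      ‖kernelOp μ Ω G (K.indicator fun _ => 1) y‖ₑ := fun y hy => by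
    rw [kernelOp_indicator_one hK.measurableSet hKΩ,
      Real.enorm_of_nonneg (integral_nonneg (hG.nonneg y)),
      ← ofReal_integral_norm_eq_lintegral_enorm (hC y hy).1]
    simp only [Real.norm_of_nonneg (hG.nonneg _ _)]
  calc ∫⁻ x in K, ∫⁻ y in Ω, ‖G x y * f y‖ₑ ∂μ ∂μ
      = ∫⁻ y in Ω, ‖f y‖ₑ * ∫⁻ x in K, ‖G y x‖ₑ ∂μ ∂μ :=
        lintegral_lintegral_enorm_kernel_mul hG.measurable hG.symm hfm
    _ = ∫⁻ y in Ω, ‖f y * kernelOp μ Ω G (K.indicator fun _ => 1) y‖ₑ ∂μ :=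
        setLIntegral_congr_fun hΩ fun y hy => by simp only [hpot y hy, enorm_mul]
    _ ≤ _ := lintegral_enorm_mul_le_mul_eLpNorm_top_div
        ((ae_restrict_mem hΩ).mono hG.weight_pos) hf

lemma integrable_prod (hG : IsGreenKernel μ Ω G w) (hΩ : MeasurableSet Ω)
    (hfm : AEStronglyMeasurable f (μ.restrict Ω)) (hf : IntegrableOn (fun x => |f x| * w x) Ω μ)
    (hK : IsCompact K) (hKΩ : K ⊆ Ω) :
    Integrable (fun p : X × X => G p.1 p.2 * f p.2) ((μ.restrict K).prod (μ.restrict Ω)) := by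
  have hmeas : AEStronglyMeasurable (fun p : X × X => G p.1 p.2 * f p.2)
      ((μ.restrict K).prod (μ.restrict Ω)) :=
    hG.measurable.aestronglyMeasurable.mul hfm.comp_snd
  refine ⟨hmeas, ?_⟩
  rw [hasFiniteIntegral_iff_enorm, lintegral_prod _ hmeas.enorm]
  exact (hG.lintegral_lintegral_enorm_le hΩ hfm hf hK hKΩ).trans_lt
    (ENNReal.mul_lt_top ENNReal.ofReal_lt_top
      (hG.eLpNorm_kernelOp_indicator_div_lt_top hΩ hK hKΩ))

lemma integrableOn_kernelOp (hG : IsGreenKernel μ Ω G w) (hΩ : MeasurableSet Ω)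
    (hfm : AEStronglyMeasurable f (μ.restrict Ω)) (hf : IntegrableOn (fun x => |f x| * w x) Ω μ)
    (hK : IsCompact K) (hKΩ : K ⊆ Ω) : IntegrableOn (kernelOp μ Ω G f) K μ :=
  (hG.integrable_prod hΩ hfm hf hK hKΩ).integral_prod_left

lemma locallyIntegrableOn_kernelOp [LocallyCompactSpace X] (hG : IsGreenKernel μ Ω G w)
    (hΩ : IsOpen Ω) (hfm : AEStronglyMeasurable f (μ.restrict Ω))
    (hf : IntegrableOn (fun x => |f x| * w x) Ω μ) :
    LocallyIntegrableOn (kernelOp μ Ω G f) Ω μ :=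
  (locallyIntegrableOn_iff hΩ.isLocallyClosed).2 fun _ hKΩ hK =>
    hG.integrableOn_kernelOp hΩ.measurableSet hfm hf hK hKΩ

lemma ofReal_setIntegral_abs_kernelOp_le (hG : IsGreenKernel μ Ω G w) (hΩ : MeasurableSet Ω)
    (hfm : AEStronglyMeasurable f (μ.restrict Ω)) (hf : IntegrableOn (fun x => |f x| * w x) Ω μ)
    (hK : IsCompact K) (hKΩ : K ⊆ Ω) :
    ENNReal.ofReal (∫ x in K, |kernelOp μ Ω G f x| ∂μ) ≤
      ENNReal.ofReal (∫ x in Ω, |f x| * w x ∂μ) *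
        eLpNorm (fun x => kernelOp μ Ω G (K.indicator fun _ => 1) x / w x) ⊤ (μ.restrict Ω) :=
  calc ENNReal.ofReal (∫ x in K, |kernelOp μ Ω G f x| ∂μ)
      = ∫⁻ x in K, ‖kernelOp μ Ω G f x‖ₑ ∂μ :=
        ofReal_integral_norm_eq_lintegral_enorm (hG.integrableOn_kernelOp hΩ hfm hf hK hKΩ)
    _ ≤ ∫⁻ x in K, ∫⁻ y in Ω, ‖G x y * f y‖ₑ ∂μ ∂μ :=
        lintegral_mono fun _ => enorm_integral_le_lintegral_enorm _
    _ ≤ _ := hG.lintegral_lintegral_enorm_le hΩ hfm hf hK hKΩ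

lemma isWeakDualSolution_kernelOp (hG : IsGreenKernel μ Ω G w) (hΩ : MeasurableSet Ω)
    (hfm : AEStronglyMeasurable f (μ.restrict Ω)) (hf : IntegrableOn (fun x => |f x| * w x) Ω μ) :
    IsWeakDualSolution μ Ω G f (kernelOp μ Ω G f) := by
  rintro ψ hψm ⟨M, hM⟩ hψc hψΩ
  set F : X × X → ℝ := Function.uncurry fun x y => ψ x * (G x y * f y) with hF
  have hintK : Integrable F ((μ.restrict (tsupport ψ)).prod (μ.restrict Ω)) :=
    (hG.integrable_prod hΩ hfm hf hψc hψΩ).bdd_mul (c := M)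
      (hψm.comp measurable_fst).aestronglyMeasurable (ae_of_all _ fun p => hM p.1)
  have hprod : (μ.restrict (tsupport ψ)).prod (μ.restrict Ω) =
      ((μ.restrict Ω).prod (μ.restrict Ω)).restrict (tsupport ψ ×ˢ univ) := by
    rw [← Measure.prod_restrict, Measure.restrict_univ, Measure.restrict_restrict_of_subset hψΩ]
  have hsupp : Function.support F ⊆ tsupport ψ ×ˢ univ := fun p hp =>
    ⟨subset_tsupport ψ fun h => hp (by simp [hF, Function.uncurry, h]), mem_univ _⟩
  rw [hprod] at hintK
  exact setIntegral_kernelOp_mul_comm hG.symm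
    ((integrableOn_iff_integrable_of_support_subset hsupp).1 hintK)

end IsGreenKernel

end GreenKernel

section BoundaryEstimate

lemma min_mul_div_sq_le {a b c D r : ℝ} (ha : 0 ≤ a) (hc : 0 < c) (hcb : c ≤ b) (hbD : b ≤ D)
    (hbar : b ≤ a + r) :
    min (a * b / r ^ 2) 1 ≤ (D / (c / 2) ^ 2 + 1 / (c / 2)) * a := by
  have hD : 0 < D := by linarith
  rw [add_mul]
  rcases le_or_gt (c / 2) r with hr | hr
  · calc min (a * b / r ^ 2) 1 ≤ a * b / r ^ 2 := min_le_left _ _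
      _ ≤ a * D / (c / 2) ^ 2 := by gcongr
      _ = D / (c / 2) ^ 2 * a := by ring
      _ ≤ D / (c / 2) ^ 2 * a + 1 / (c / 2) * a := le_add_of_nonneg_right (by positivity)
  · calc min (a * b / r ^ 2) 1 ≤ 1 := min_le_right _ _
      _ ≤ a / (c / 2) := (one_le_div (by positivity)).2 (by linarith)
      _ = 1 / (c / 2) * a := by ring
      _ ≤ D / (c / 2) ^ 2 * a + 1 / (c / 2) * a := le_add_of_nonneg_left (by positivity)

/-- The kernel of (K2) in a metric space, with `p` in place of the exponent `2s - n`: on `Euc n`,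
`Hker Ω s γ` is `modelKernel Ω (2 * s - n) γ`. -/
def modelKernel {X : Type*} [PseudoMetricSpace X] (Ω : Set X) (p γ : ℝ) (x y : X) : ℝ :=
  dist x y ^ p * (min (infDist x (frontier Ω) * infDist y (frontier Ω) / dist x y ^ (2 : ℝ)) 1) ^ γ

lemma exists_modelKernel_le {X : Type*} [PseudoMetricSpace X] {Ω K : Set X} {p γ : ℝ} (hγ : 0 ≤ γ)
    (hK : IsCompact K) (hδ : ∀ y ∈ K, 0 < infDist y (frontier Ω)) :
    ∃ C, 0 ≤ C ∧ ∀ x, ∀ y ∈ K,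
      modelKernel Ω p γ x y ≤ C * infDist x (frontier Ω) ^ γ * dist x y ^ p := by
  have hcont : Continuous fun y => infDist y (frontier Ω) := continuous_infDist_pt _
  obtain ⟨c, hc, hcK⟩ := hK.exists_forall_le' hcont.continuousOn hδ
  obtain ⟨D, hD0, hD⟩ := (hK.bddAbove_image hcont.continuousOn).exists_ge 0
  refine ⟨(D / (c / 2) ^ 2 + 1 / (c / 2)) ^ γ, by positivity, fun x y hy => ?_⟩
  have hyD : infDist y (frontier Ω) ≤ D := hD _ (mem_image_of_mem _ hy)
  have hδx : 0 ≤ infDist x (frontier Ω) := infDist_nonneg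
  have hδy : 0 ≤ infDist y (frontier Ω) := infDist_nonneg
  rw [modelKernel, Real.rpow_two, mul_comm, ← Real.mul_rpow (by positivity) hδx]
  gcongr
  refine min_mul_div_sq_le hδx hc (hcK y hy) hyD ?_
  rw [dist_comm]
  exact infDist_le_infDist_add_dist

variable {E : Type*} [NormedAddCommGroup E] [NormedSpace ℝ E] [Nontrivial E] {Ω : Set E}

lemma infDist_frontier_pos (hΩo : IsOpen Ω) (hΩb : Bornology.IsBounded Ω) {x : E} (hx : x ∈ Ω) :
    0 < infDist x (frontier Ω) := by
  have hne : (frontier Ω).Nonempty := nonempty_frontier_iff.2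
    ⟨⟨x, hx⟩, fun h => NormedSpace.unbounded_univ ℝ E (h ▸ hΩb)⟩
  refine (isClosed_frontier.notMem_iff_infDist_pos hne).1 fun hxf => ?_
  rw [hΩo.frontier_eq] at hxf
  exact hxf.2 hx

variable [FiniteDimensional ℝ E] [MeasurableSpace E] [BorelSpace E] {μ : Measure E}
  [μ.IsAddHaarMeasure] {p γ Λ : ℝ} {G : E → E → ℝ}

lemma exists_setIntegral_dist_rpow_le {B : Set E} (hB : Bornology.IsBounded B)
    (hp : -(Module.finrank ℝ E : ℝ) < p) :
    ∃ A, ∀ x ∈ B, IntegrableOn (fun y => dist x y ^ p) B μ ∧ ∫ y in B, dist x y ^ p ∂μ ≤ A := by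
  obtain ⟨R, hR⟩ := Metric.isBounded_iff.1 hB
  have hint : IntegrableOn (fun z : E => ‖z‖ ^ p) (ball 0 (R + 1)) μ := by
    refine integrableOn_ball_of_norm_le_rpow (C := 1) (α := -p) Module.finrank_pos
      (by linarith) (ae_of_all _ fun z => ?_)
      (Measurable.aestronglyMeasurable (by fun_prop))
    rw [Real.norm_of_nonneg (by positivity), one_mul, neg_neg]
  refine ⟨∫ z in ball 0 (R + 1), ‖z‖ ^ p ∂μ, fun x hx => ?_⟩
  have hsub : B ⊆ (· - x) ⁻¹' ball 0 (R + 1) := fun y hy => by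
    rw [mem_preimage, mem_ball_zero_iff, ← dist_eq_norm]
    linarith [hR hy hx]
  have hmp := measurePreserving_sub_right μ x
  have hemb := measurableEmbedding_subRight x
  have hint' : IntegrableOn (fun y => dist x y ^ p) ((· - x) ⁻¹' ball 0 (R + 1)) μ := by
    simp only [dist_comm x, dist_eq_norm]
    exact (hmp.integrableOn_comp_preimage hemb).2 hint
  refine ⟨hint'.mono_set hsub, ?_⟩
  calc ∫ y in B, dist x y ^ p ∂μ
      ≤ ∫ y in (· - x) ⁻¹' ball 0 (R + 1), dist x y ^ p ∂μ :=
        setIntegral_mono_set hint' (ae_of_all _ fun y => by positivity) hsub.eventuallyLE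
    _ = ∫ z in ball 0 (R + 1), ‖z‖ ^ p ∂μ := by
        simp only [dist_comm x, dist_eq_norm]
        exact hmp.setIntegral_preimage_emb hemb (fun z => ‖z‖ ^ p) _

lemma exists_setIntegral_kernel_le (hΩo : IsOpen Ω) (hΩb : Bornology.IsBounded Ω)
    (hp : -(Module.finrank ℝ E : ℝ) < p) (hγ : 0 ≤ γ) (hΛ : 0 ≤ Λ)
    (hGm : Measurable (Function.uncurry G)) (hG0 : ∀ x y, 0 ≤ G x y)
    (hGH : ∀ x ∈ Ω, ∀ y ∈ Ω, x ≠ y → G x y ≤ Λ * modelKernel Ω p γ x y)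
    {K : Set E} (hKΩ : K ⊆ Ω) (hK : IsCompact K) :
    ∃ C, ∀ x ∈ Ω, IntegrableOn (G x) K μ ∧
      ∫ y in K, G x y ∂μ ≤ C * infDist x (frontier Ω) ^ γ := by
  obtain ⟨A, hA⟩ := exists_setIntegral_dist_rpow_le (μ := μ) hΩb hp
  obtain ⟨C, hC0, hC⟩ := exists_modelKernel_le (p := p) hγ hK
    fun y hy => infDist_frontier_pos hΩo hΩb (hKΩ hy)
  refine ⟨Λ * C * A, fun x hx => ?_⟩
  obtain ⟨hint, hle⟩ := hA x hx
  set c := Λ * C * infDist x (frontier Ω) ^ γ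
  have hc0 : 0 ≤ c := mul_nonneg (by positivity) (Real.rpow_nonneg infDist_nonneg _)
  have hG : ∀ᵐ y ∂μ.restrict K, G x y ≤ c * dist x y ^ p := by
    filter_upwards [ae_restrict_of_ae (Measure.ae_ne μ x), ae_restrict_mem hK.measurableSet]
      with y hyx hyK
    calc G x y ≤ Λ * modelKernel Ω p γ x y := hGH x hx y (hKΩ hyK) hyx.symm
      _ ≤ Λ * (C * infDist x (frontier Ω) ^ γ * dist x y ^ p) := by gcongr; exact hC x y hyK
      _ = c * dist x y ^ p := by ring
  have hintK : IntegrableOn (fun y => c * dist x y ^ p) K μ := (hint.mono_set hKΩ).const_mul c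
  have hGint : IntegrableOn (G x) K μ :=
    hintK.mono' hGm.of_uncurry_left.aestronglyMeasurable
      (hG.mono fun y hy => by rwa [Real.norm_of_nonneg (hG0 x y)])
  refine ⟨hGint, ?_⟩
  calc ∫ y in K, G x y ∂μ ≤ ∫ y in K, c * dist x y ^ p ∂μ := integral_mono_ae hGint hintK hG
    _ = c * ∫ y in K, dist x y ^ p ∂μ := integral_const_mul _ _
    _ ≤ c * ∫ y in Ω, dist x y ^ p ∂μ := mul_le_mul_of_nonneg_left
        (setIntegral_mono_set hint (ae_of_all _ fun y => by positivity) hKΩ.eventuallyLE) hc0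
    _ ≤ c * A := by gcongr
    _ = Λ * C * A * infDist x (frontier Ω) ^ γ := by ring

lemma isGreenKernel_of_le_modelKernel (hΩo : IsOpen Ω) (hΩb : Bornology.IsBounded Ω)
    (hp : -(Module.finrank ℝ E : ℝ) < p) (hγ : 0 ≤ γ) (hΛ : 0 ≤ Λ)
    (hGm : Measurable (Function.uncurry G)) (hG0 : ∀ x y, 0 ≤ G x y)
    (hGsymm : ∀ x y, G x y = G y x)
    (hGH : ∀ x ∈ Ω, ∀ y ∈ Ω, x ≠ y → G x y ≤ Λ * modelKernel Ω p γ x y) :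
    IsGreenKernel μ Ω G fun x => infDist x (frontier Ω) ^ γ where
  measurable := hGm
  nonneg := hG0
  symm := hGsymm
  weight_pos _ hx := Real.rpow_pos_of_pos (infDist_frontier_pos hΩo hΩb hx) γ
  potential_le _ hKΩ hK := exists_setIntegral_kernel_le hΩo hΩb hp hγ hΛ hGm hG0 hGH hKΩ hK

end BoundaryEstimate

theorem statement2_general {E : Type*} [NormedAddCommGroup E] [NormedSpace ℝ E] [Nontrivial E]
    [FiniteDimensional ℝ E] [MeasurableSpace E] [BorelSpace E] {μ : Measure E}
    [μ.IsAddHaarMeasure] {Ω : Set E} {p γ Λ : ℝ} {G : E → E → ℝ} {f : E → ℝ}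
    (hΩo : IsOpen Ω) (hΩb : Bornology.IsBounded Ω)
    (hp : -(Module.finrank ℝ E : ℝ) < p) (hγ : 0 ≤ γ) (hΛ : 0 ≤ Λ)
    (hGm : Measurable (Function.uncurry G)) (hG0 : ∀ x y, 0 ≤ G x y)
    (hGsymm : ∀ x y, G x y = G y x)
    (hGH : ∀ x ∈ Ω, ∀ y ∈ Ω, x ≠ y → G x y ≤ Λ * modelKernel Ω p γ x y)
    (hfm : AEStronglyMeasurable f (μ.restrict Ω))
    (hf : IntegrableOn (fun x => |f x| * infDist x (frontier Ω) ^ γ) Ω μ) :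
    LocallyIntegrableOn (kernelOp μ Ω G f) Ω μ ∧
    IsWeakDualSolution μ Ω G f (kernelOp μ Ω G f) ∧
    (∀ v, LocallyIntegrableOn v Ω μ → IsWeakDualSolution μ Ω G f v →
      v =ᵐ[μ.restrict Ω] kernelOp μ Ω G f) ∧
    ∀ K, IsCompact K → K ⊆ Ω →
      eLpNorm (fun x => kernelOp μ Ω G (K.indicator fun _ => 1) x / infDist x (frontier Ω) ^ γ) ⊤
          (μ.restrict Ω) < ⊤ ∧
      ENNReal.ofReal (∫ x in K, |kernelOp μ Ω G f x| ∂μ) ≤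
        ENNReal.ofReal (∫ x in Ω, |f x| * infDist x (frontier Ω) ^ γ ∂μ) *
          eLpNorm (fun x => kernelOp μ Ω G (K.indicator fun _ => 1) x / infDist x (frontier Ω) ^ γ)
            ⊤ (μ.restrict Ω) := by
  have hG : IsGreenKernel μ Ω G fun x => infDist x (frontier Ω) ^ γ :=
    isGreenKernel_of_le_modelKernel hΩo hΩb hp hγ hΛ hGm hG0 hGsymm hGH
  have hΩm := hΩo.measurableSet
  have hu := hG.locallyIntegrableOn_kernelOp hΩo hfm hf
  have hdual := hG.isWeakDualSolution_kernelOp hΩm hfm hf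
  exact ⟨hu, hdual, fun v hv hv' => hv'.ae_eq hΩo hv hu hdual, fun K hK hKΩ =>
    ⟨hG.eLpNorm_kernelOp_indicator_div_lt_top hΩm hK hKΩ,
      hG.ofReal_setIntegral_abs_kernelOp_le hΩm hfm hf hK hKΩ⟩⟩

/-- for `f ∈ L¹(Ω, δ^γ)`, `u = 𝒢(f)` is locally integrable in Ω,
is the unique local-L¹ weak-dual solution, and satisfies the compact estimate. -/
theorem statement2 {n : ℕ} (Ω : Set (Euc n)) (s γ Λ : ℝ) (G : Euc n → Euc n → ℝ)
    (hΩo : IsOpen Ω) (hΩb : Bornology.IsBounded Ω) (hΩne : Ω.Nonempty)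
    (hs0 : 0 < s) (hs1 : s ≤ 1) (hγ0 : 0 < γ) (hγ1 : γ ≤ 1) (hsn : 2 * s ≤ (n : ℝ))
    (hGm : Measurable (Function.uncurry G)) (hGpos : ∀ x y, 0 ≤ G x y)
    (hGsym : ∀ x y, G x y = G y x) (hΛ : 1 ≤ Λ)
    (hK2 : ∀ x ∈ Ω, ∀ y ∈ Ω, x ≠ y →
      Λ⁻¹ * Hker Ω s γ x y ≤ G x y ∧ G x y ≤ Λ * Hker Ω s γ x y)
    (f : Euc n → ℝ) (hfm : Measurable f)
    (hf : IntegrableOn (fun x => |f x| * bdist Ω x ^ γ) Ω) :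
    LocallyIntegrableOn (Gop Ω G f) Ω ∧
    (∀ ψ : Euc n → ℝ, Measurable ψ → (∃ M, ∀ x, |ψ x| ≤ M) →
        IsCompact (tsupport ψ) → tsupport ψ ⊆ Ω →
        ∫ x in Ω, Gop Ω G f x * ψ x = ∫ x in Ω, f x * Gop Ω G ψ x) ∧
    (∀ v : Euc n → ℝ, LocallyIntegrableOn v Ω →
        (∀ ψ : Euc n → ℝ, Measurable ψ → (∃ M, ∀ x, |ψ x| ≤ M) →
          IsCompact (tsupport ψ) → tsupport ψ ⊆ Ω →
          ∫ x in Ω, v x * ψ x = ∫ x in Ω, f x * Gop Ω G ψ x) →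
        v =ᵐ[volume.restrict Ω] Gop Ω G f) ∧
    (∀ K : Set (Euc n), IsCompact K → K ⊆ Ω →
        eLpNorm (fun x => Gop Ω G (K.indicator fun _ => 1) x / bdist Ω x ^ γ) ⊤
            (volume.restrict Ω) < ⊤ ∧
        ENNReal.ofReal (∫ x in K, |Gop Ω G f x|) ≤
          ENNReal.ofReal (∫ x in Ω, |f x| * bdist Ω x ^ γ) *
            eLpNorm (fun x => Gop Ω G (K.indicator fun _ => 1) x / bdist Ω x ^ γ) ⊤
              (volume.restrict Ω)) := by
  have : Nontrivial (Euc n) := Module.nontrivial_of_finrank_pos (R := ℝ) <| by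
    rw [finrank_euclideanSpace_fin, ← Nat.cast_pos (α := ℝ)]
    linarith
  exact statement2_general hΩo hΩb (p := 2 * s - n) (by rw [finrank_euclideanSpace_fin]; linarith)
    hγ0.le (by linarith) hGm hGpos hGsym (fun x hx y hy hxy => (hK2 x hx y hy hxy).2)
    hfm.aestronglyMeasurable hf
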